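/- arXiv:2110.08694 — 2 statements merged into one kernel-verified Lean document; each statement's English description precedes it below -/
import Mathlib

section
/- Let c ∈ K with ord(c) ≥ 2/(p−1) and let a_1, …, a_N ∈ K with ord(a_j) ≥ 0. Then for every u ∈ δ ∩ ℤ^n, the family of terms c^{k_1+⋯+k_N}·(Π_{j=1}^N a_j^{k_j})/(Π_{j=1}^N k_j!), indexed by the tuples k = (k_1,…,k_N) ∈ ℤ_{≥0}^N with Σ_j k_j w_j = u, is summable in K, and its sum B_u satisfies ord(B_u) ≥ w(u)/(p−1). (This expresses that exp(c·f̂(x)) = Π_{j=1}^N exp(c·a_j x^{w_j}), where f̂(x) = Σ_j a_j x^{w_j}, lies in the space L(1/(p−1), 0) of series Σ_u B_u x^u with ord(B_u) ≥ w(u)/(p−1).) -/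
open Pointwise

/-- The real vector associated to an integer lattice vector. -/
def intToReal (n : ℕ) (u : Fin n → ℤ) : Fin n → ℝ := fun i => (u i : ℝ)

/-- The convex cone `δ` generated by `w₁, …, w_N`. -/
def deltaCone (n N : ℕ) (w : Fin N → Fin n → ℤ) : Set (Fin n → ℝ) :=
  {x | ∃ c : Fin N → ℝ, (∀ j, 0 ≤ c j) ∧ x = ∑ j, c j • intToReal n (w j)}

/-- The Newton polyhedron `Δ`: the convex hull of `{w₁, …, w_N} ∪ {0}`. -/
def newtonPolyhedron (n N : ℕ) (w : Fin N → Fin n → ℤ) : Set (Fin n → ℝ) :=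
  convexHull ℝ (insert 0 (Set.range fun j => intToReal n (w j)))

/-- The weight function `w(u) = inf {c : 0 ≤ c ∧ u ∈ c • Δ}`. -/
noncomputable def weight (n N : ℕ) (w : Fin N → Fin n → ℤ) (u : Fin n → ℝ) : ℝ :=
  sInf {c : ℝ | 0 ≤ c ∧ u ∈ c • newtonPolyhedron n N w}

/-- The set `S` of lattice points of the form `∑ rⱼ wⱼ` with `0 ≤ rⱼ ≤ 1`. -/
def latticeS (n N : ℕ) (w : Fin N → Fin n → ℤ) : Set (Fin n → ℤ) :=
  {s | ∃ r : Fin N → ℝ, (∀ j, 0 ≤ r j ∧ r j ≤ 1) ∧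
    intToReal n s = ∑ j, r j • intToReal n (w j)}

open scoped Classical

/-- The additive valuation `ord x = -log_p ‖x‖`, with `ord 0 = +∞`, valued in `EReal`. -/
noncomputable def ord (p : ℕ) {K : Type*} [NormedField K] (x : K) : EReal :=
  if x = 0 then ⊤ else ((-Real.logb p ‖x‖ : ℝ) : EReal)

/-- The partial sum `γ_l = ∑_{i=0}^l γ^{p^i} / p^i`. -/
noncomputable def gammaPartial (p : ℕ) {K : Type*} [NormedField K] (γ : K) (l : ℕ) : K :=
  ∑ i ∈ Finset.range (l + 1), γ ^ p ^ i / (p : K) ^ i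

/-!
Legendre's formula gives `‖m!‖ ^ (p - 1) = ‖p‖ ^ (m - s)` with `s` the sum of the base-`p` digits
of `m`, so `‖x ^ m / m!‖ ≤ ρ ^ m` as soon as `‖x‖ ^ (p - 1) ≤ ρ ^ (p - 1) * ‖p‖`. For `ρ = p ^ (-b)`
this hypothesis reads `ord x ≥ b + 1 / (p - 1)`, and it holds for every `x = c * a_j`; the term
indexed by `k` then has norm at most `ρ ^ |k|`, where `|k| = ∑ k_j`.

If `b > 0`, only finitely many `k` have `ρ ^ |k|` above a given positive bound, which is all that
summability requires in a complete ultrametric field. If moreover `∑ k_j w_j = u`, then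
`u ∈ |k| • Δ`, so `w(u) ≤ |k|`: every term, hence the sum, has norm at most `ρ ^ w(u)`. The case
`b = 1 / (p - 1)` is the theorem.
-/

section NatCast

variable {R : Type*} [SeminormedRing R] [NormOneClass R] [IsUltrametricDist R]

lemma norm_natCast_eq_one_of_coprime {m q : ℕ} (hmq : m.Coprime q) (hq : ‖(q : R)‖ < 1) :
    ‖(m : R)‖ = 1 := by
  refine (IsUltrametricDist.norm_natCast_le_one R m).antisymm ?_
  obtain ⟨x, y, hxy⟩ := Nat.isCoprime_iff_coprime.2 hmq
  have bezout : (x : R) * m + (y : R) * q = 1 := by exact_mod_cast congrArg (Int.cast : ℤ → R) hxy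
  have norm_intCast_mul_le (z : ℤ) (t : R) : ‖(z : R) * t‖ ≤ ‖t‖ :=
    (norm_mul_le _ _).trans <|
      mul_le_of_le_one_left (norm_nonneg t) (IsUltrametricDist.norm_intCast_le_one R z)
  have one_le_max : 1 ≤ max ‖(m : R)‖ ‖(q : R)‖ :=
    calc 1 = ‖(x : R) * m + (y : R) * q‖ := by rw [bezout, norm_one]
      _ ≤ max ‖(x : R) * m‖ ‖(y : R) * q‖ := IsUltrametricDist.norm_add_le_max _ _
      _ ≤ max ‖(m : R)‖ ‖(q : R)‖ :=
        max_le_max (norm_intCast_mul_le x m) (norm_intCast_mul_le y q)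
  exact (le_max_iff.1 one_le_max).resolve_right hq.not_ge

variable [NormMulClass R] {p : ℕ}

lemma norm_natCast_eq_norm_pow_padicValNat (hp : p.Prime) (hpR : ‖(p : R)‖ < 1) {m : ℕ}
    (hm : m ≠ 0) : ‖(m : R)‖ = ‖(p : R)‖ ^ padicValNat p m := by
  have hcop : (m.divMaxPow p).Coprime p :=
    ((hp.coprime_iff_not_dvd).2 (Nat.not_dvd_divMaxPow hp.one_lt hm)).symm
  conv_lhs => rw [← Nat.pow_padicValNat_mul_divMaxPow p m]
  rw [Nat.cast_mul, Nat.cast_pow, norm_mul, norm_pow, norm_natCast_eq_one_of_coprime hcop hpR,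
    mul_one]

lemma norm_factorial_pow_sub_one (hp : p.Prime) (hpR : ‖(p : R)‖ < 1) (m : ℕ) :
    ‖(m.factorial : R)‖ ^ (p - 1) = ‖(p : R)‖ ^ (m - (p.digits m).sum) := by
  have : Fact p.Prime := ⟨hp⟩
  rw [norm_natCast_eq_norm_pow_padicValNat hp hpR m.factorial_ne_zero, ← pow_mul, mul_comm,
    sub_one_mul_padicValNat_factorial]

lemma norm_pow_le_norm_factorial_pow_sub_one (hp : p.Prime) (hpR : ‖(p : R)‖ < 1) (m : ℕ) :
    ‖(p : R)‖ ^ m ≤ ‖(m.factorial : R)‖ ^ (p - 1) := by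
  rw [norm_factorial_pow_sub_one hp hpR]
  exact pow_le_pow_of_le_one (norm_nonneg _) hpR.le (Nat.sub_le _ _)

end NatCast

lemma tendsto_sum_nat_cofinite_atTop (ι : Type*) [Fintype ι] :
    Filter.Tendsto (fun k : ι → ℕ => ∑ j, k j) Filter.cofinite Filter.atTop := by
  refine Filter.tendsto_atTop.2 fun M => Filter.eventually_cofinite.2 ?_
  refine (Set.finite_Iic fun _ : ι => M).subset fun k (hk : ¬ M ≤ ∑ j, k j) j => ?_
  exact (Finset.single_le_sum_of_canonicallyOrdered (Finset.mem_univ j)).trans (not_le.1 hk).le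

lemma pow_sum_mul_prod_pow_div_prod_factorial {F ι : Type*} [Field F] [Fintype ι] (c : F)
    (a : ι → F) (k : ι → ℕ) :
    c ^ (∑ j, k j) * (∏ j, a j ^ k j) / ((∏ j, (k j).factorial : ℕ) : F) =
      ∏ j, (c * a j) ^ k j / ((k j).factorial : F) := by
  simp only [mul_pow, Finset.prod_div_distrib, Finset.prod_mul_distrib, Finset.prod_pow_eq_pow_sum,
    Nat.cast_prod]

section ExpTerm

variable {K : Type*} [NormedField K] [IsUltrametricDist K] {ι : Type*} [Fintype ι] {p : ℕ} {ρ : ℝ}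

lemma norm_pow_div_factorial_le (hp : p.Prime) (hpK : ‖(p : K)‖ < 1) (hρ : 0 ≤ ρ) {x : K}
    (hx : ‖x‖ ^ (p - 1) ≤ ρ ^ (p - 1) * ‖(p : K)‖) (m : ℕ) :
    ‖x ^ m / (m.factorial : K)‖ ≤ ρ ^ m := by
  rw [norm_div, norm_pow]
  refine div_le_of_le_mul₀ (norm_nonneg _) (pow_nonneg hρ m) ?_
  refine le_of_pow_le_pow_left₀ (Nat.sub_ne_zero_of_lt hp.one_lt) (by positivity) ?_
  calc (‖x‖ ^ m) ^ (p - 1) = (‖x‖ ^ (p - 1)) ^ m := pow_right_comm _ _ _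
    _ ≤ (ρ ^ (p - 1) * ‖(p : K)‖) ^ m := by gcongr
    _ = (ρ ^ m) ^ (p - 1) * ‖(p : K)‖ ^ m := by rw [mul_pow, pow_right_comm]
    _ ≤ (ρ ^ m) ^ (p - 1) * ‖(m.factorial : K)‖ ^ (p - 1) := by
      gcongr
      exact norm_pow_le_norm_factorial_pow_sub_one hp hpK m
    _ = (ρ ^ m * ‖(m.factorial : K)‖) ^ (p - 1) := (mul_pow _ _ _).symm

lemma norm_prod_pow_div_factorial_le (hp : p.Prime) (hpK : ‖(p : K)‖ < 1) (hρ : 0 ≤ ρ) {x : ι → K}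
    (hx : ∀ j, ‖x j‖ ^ (p - 1) ≤ ρ ^ (p - 1) * ‖(p : K)‖) (k : ι → ℕ) :
    ‖∏ j, x j ^ k j / ((k j).factorial : K)‖ ≤ ρ ^ ∑ j, k j := by
  rw [norm_prod, ← Finset.prod_pow_eq_pow_sum]
  exact Finset.prod_le_prod (fun _ _ => norm_nonneg _)
    fun j _ => norm_pow_div_factorial_le hp hpK hρ (hx j) (k j)

lemma summable_prod_pow_div_factorial [CompleteSpace K] (hp : p.Prime) (hpK : ‖(p : K)‖ < 1)
    (hρ : 0 ≤ ρ) (hρ_lt : ρ < 1) {x : ι → K}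
    (hx : ∀ j, ‖x j‖ ^ (p - 1) ≤ ρ ^ (p - 1) * ‖(p : K)‖) :
    Summable fun k : ι → ℕ => ∏ j, x j ^ k j / ((k j).factorial : K) := by
  apply NonarchimedeanAddGroup.summable_of_tendsto_cofinite_zero
  exact squeeze_zero_norm (norm_prod_pow_div_factorial_le hp hpK hρ hx)
    ((tendsto_pow_atTop_nhds_zero_of_lt_one hρ hρ_lt).comp (tendsto_sum_nat_cofinite_atTop ι))

end ExpTerm

section Weight

lemma sum_smul_mem_sum_smul_of_convex {𝕜 E ι : Type*} [Field 𝕜] [LinearOrder 𝕜]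
    [IsStrictOrderedRing 𝕜] [AddCommGroup E] [Module 𝕜 E] {C : Set E} (hC : Convex 𝕜 C)
    (hne : C.Nonempty) {s : Finset ι} {r : ι → 𝕜} {v : ι → E} (hr : ∀ j ∈ s, 0 ≤ r j)
    (hv : ∀ j ∈ s, v j ∈ C) : ∑ j ∈ s, r j • v j ∈ (∑ j ∈ s, r j) • C := by
  induction s using Finset.induction_on with
  | empty => simp [Set.zero_smul_set hne]
  | insert i s hi ih =>
    simp only [Finset.forall_mem_insert] at hr hv
    rw [Finset.sum_insert hi, Finset.sum_insert hi, hC.add_smul hr.1 (Finset.sum_nonneg hr.2)]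
    exact Set.add_mem_add (Set.smul_mem_smul_set hv.1) (ih hr.2 hv.2)

variable {n N : ℕ} {w : Fin N → Fin n → ℤ}

lemma weight_le {u : Fin n → ℝ} {c : ℝ} (hc : 0 ≤ c) (hu : u ∈ c • newtonPolyhedron n N w) :
    weight n N w u ≤ c :=
  csInf_le ⟨0, fun _ hx => hx.1⟩ ⟨hc, hu⟩

lemma weight_sum_smul_le {r : Fin N → ℝ} (hr : ∀ j, 0 ≤ r j) :
    weight n N w (∑ j, r j • intToReal n (w j)) ≤ ∑ j, r j := by
  refine weight_le (Finset.sum_nonneg fun j _ => hr j) ?_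
  exact sum_smul_mem_sum_smul_of_convex (convex_convexHull ℝ _)
    ⟨0, subset_convexHull ℝ _ (Set.mem_insert _ _)⟩ (fun j _ => hr j)
    fun j _ => subset_convexHull ℝ _ (Set.mem_insert_of_mem _ ⟨j, rfl⟩)

lemma intToReal_sum_smul (k : Fin N → ℤ) :
    intToReal n (∑ j, k j • w j) = ∑ j, (k j : ℝ) • intToReal n (w j) := by
  ext i
  simp [intToReal, Finset.sum_apply]

lemma weight_intToReal_le_sum {u : Fin n → ℤ} {k : Fin N → ℕ} (hk : ∑ j, (k j : ℤ) • w j = u) :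
    weight n N w (intToReal n u) ≤ ((∑ j, k j : ℕ) : ℝ) := by
  rw [← hk, intToReal_sum_smul, Nat.cast_sum]
  exact weight_sum_smul_le fun j => Nat.cast_nonneg (k j)

end Weight

section Ord

variable {K : Type*} [NormedField K] {p : ℕ}

lemma coe_le_ord_iff (hp : 1 < p) {x : K} {t : ℝ} :
    (t : EReal) ≤ ord p x ↔ ‖x‖ ≤ (p : ℝ) ^ (-t) := by
  rcases eq_or_ne x 0 with rfl | hx
  · simpa [ord] using Real.rpow_nonneg p.cast_nonneg (-t)
  · rw [ord, if_neg hx, EReal.coe_le_coe_iff, le_neg,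
      Real.logb_le_iff_le_rpow (Nat.one_lt_cast.2 hp) (norm_pos_iff.2 hx)]

lemma zero_le_ord_iff (hp : 1 < p) {x : K} : 0 ≤ ord p x ↔ ‖x‖ ≤ 1 := by
  simpa using coe_le_ord_iff hp (x := x) (t := 0)

lemma norm_pow_sub_one_le_of_le_ord (hp : 1 < p) {x : K} {b : ℝ}
    (hx : ((b + 1 / ((p : ℝ) - 1) : ℝ) : EReal) ≤ ord p x) :
    ‖x‖ ^ (p - 1) ≤ ((p : ℝ) ^ (-b)) ^ (p - 1) * (p : ℝ)⁻¹ := by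
  have hp_pos : (0 : ℝ) < p := by exact_mod_cast zero_lt_one.trans hp
  have hp_sub : (p : ℝ) - 1 ≠ 0 := sub_ne_zero.2 (Nat.one_lt_cast.2 hp).ne'
  calc ‖x‖ ^ (p - 1) ≤ ((p : ℝ) ^ (-(b + 1 / ((p : ℝ) - 1)))) ^ (p - 1) := by
        gcongr
        exact (coe_le_ord_iff hp).1 hx
    _ = ((p : ℝ) ^ (-b)) ^ (p - 1) * (p : ℝ)⁻¹ := by
        rw [← Real.rpow_mul_natCast hp_pos.le, ← Real.rpow_mul_natCast hp_pos.le,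
          ← Real.rpow_neg_one, ← Real.rpow_add hp_pos, Nat.cast_sub hp.le, Nat.cast_one]
        congr 1
        field_simp
        ring

end Ord

theorem exp_mem_L_general {p : ℕ} (hp : p.Prime)
    {K : Type*} [NormedField K] [CompleteSpace K] [IsUltrametricDist K]
    (hpnorm : ‖(p : K)‖ = (p : ℝ)⁻¹)
    {n N : ℕ} (w : Fin N → Fin n → ℤ) {b : ℝ} (hb : 0 < b)
    {c : K} (hc : ((b + 1 / ((p : ℝ) - 1) : ℝ) : EReal) ≤ ord p c)
    {a : Fin N → K} (ha : ∀ j, (0 : EReal) ≤ ord p (a j)) (u : Fin n → ℤ) :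
    ∃ B : K,
      HasSum (fun k : {k : Fin N → ℕ // ∑ j, (k j : ℤ) • w j = u} =>
        c ^ (∑ j, k.1 j) * (∏ j, a j ^ k.1 j) /
          ((∏ j, Nat.factorial (k.1 j) : ℕ) : K)) B ∧
      ((b * weight n N w (intToReal n u) : ℝ) : EReal) ≤ ord p B := by
  have hp_one : (1 : ℝ) < p := Nat.one_lt_cast.2 hp.one_lt
  have hpK : ‖(p : K)‖ < 1 := hpnorm ▸ inv_lt_one_of_one_lt₀ hp_one
  set ρ : ℝ := (p : ℝ) ^ (-b) with hρ_def
  have hρ : 0 < ρ := Real.rpow_pos_of_pos (by linarith) _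
  have hρ_lt : ρ < 1 := Real.rpow_lt_one_of_one_lt_of_neg hp_one (neg_neg_of_pos hb)
  have hca (j : Fin N) : ‖c * a j‖ ^ (p - 1) ≤ ρ ^ (p - 1) * ‖(p : K)‖ := by
    have hca_le : ‖c * a j‖ ≤ ‖c‖ := by
      rw [norm_mul]
      exact mul_le_of_le_one_right (norm_nonneg c) ((zero_le_ord_iff hp.one_lt).1 (ha j))
    rw [hpnorm]
    exact (pow_le_pow_left₀ (norm_nonneg _) hca_le _).trans
      (norm_pow_sub_one_le_of_le_ord hp.one_lt hc)
  simp only [pow_sum_mul_prod_pow_div_prod_factorial]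
  refine ⟨_, ((summable_prod_pow_div_factorial hp hpK hρ.le hρ_lt hca).comp_injective
    Subtype.val_injective).hasSum, ?_⟩
  rw [coe_le_ord_iff hp.one_lt, ← neg_mul, Real.rpow_mul p.cast_nonneg, ← hρ_def]
  refine IsUltrametricDist.norm_tsum_le_of_forall_le_of_nonneg (by positivity) fun k => ?_
  calc ‖∏ j, (c * a j) ^ k.1 j / ((k.1 j).factorial : K)‖ ≤ ρ ^ ∑ j, k.1 j :=
        norm_prod_pow_div_factorial_le hp hpK hρ.le hca k.1
    _ = ρ ^ ((∑ j, k.1 j : ℕ) : ℝ) := (Real.rpow_natCast _ _).symm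
    _ ≤ ρ ^ weight n N w (intToReal n u) :=
        Real.rpow_le_rpow_of_exponent_ge hρ hρ_lt.le (weight_intToReal_le_sum k.2)

/-- if `ord(c) ≥ 2/(p-1)` and `ord(a_j) ≥ 0`, then
`exp(c·f̂(x)) = ∏_j exp(c·a_j x^{w_j})` lies in `L(1/(p-1), 0)`: for every
`u ∈ δ ∩ ℤ^n`, the family of terms `c^{∑ k_j}·(∏ a_j^{k_j})/(∏ k_j !)`, indexed
by tuples `k ∈ ℤ_{≥0}^N` with `∑ k_j w_j = u`, is summable in `K`, with sum `B_u`
satisfying `ord(B_u) ≥ w(u)/(p-1)`. -/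
theorem exp_mem_L (p : ℕ) (hp : p.Prime)
    {K : Type*} [NormedField K] [CompleteSpace K] [CharZero K]
    (hna : ∀ x y : K, ‖x + y‖ ≤ max ‖x‖ ‖y‖)
    (hpnorm : ‖(p : K)‖ = (p : ℝ)⁻¹)
    (n N : ℕ) (hn : 1 ≤ n) (w : Fin N → Fin n → ℤ) (hw : ∀ j, w j ≠ 0)
    (c : K) (hc : ((2 / ((p : ℝ) - 1) : ℝ) : EReal) ≤ ord p c)
    (a : Fin N → K) (ha : ∀ j, (0 : EReal) ≤ ord p (a j))
    (u : Fin n → ℤ) (hu : intToReal n u ∈ deltaCone n N w) :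
    ∃ B : K,
      HasSum (fun k : {k : Fin N → ℕ // ∑ j, (k j : ℤ) • w j = u} =>
        c ^ (∑ j, k.1 j) * (∏ j, a j ^ k.1 j) /
          ((∏ j, Nat.factorial (k.1 j) : ℕ) : K)) B ∧
      ((weight n N w (intToReal n u) / ((p : ℝ) - 1) : ℝ) : EReal) ≤ ord p B := by
  have : IsUltrametricDist K :=
    IsUltrametricDist.isUltrametricDist_of_forall_norm_add_le_max_norm hna
  have hb : 0 < 1 / ((p : ℝ) - 1) := one_div_pos.2 (sub_pos.2 (Nat.one_lt_cast.2 hp.one_lt))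
  have two_div : 2 / ((p : ℝ) - 1) = 1 / ((p : ℝ) - 1) + 1 / ((p : ℝ) - 1) := by ring
  simpa only [one_div_mul_eq_div] using exp_mem_L_general hp hpnorm w hb (two_div ▸ hc) ha u
end

section
/- Assume not all w_j are zero. Let b, b' > 0 and c, c' ∈ ℝ, and let (a_u)_{u ∈ δ∩ℤ^n} and (a'_u)_{u ∈ δ∩ℤ^n} be families of elements of K with ord(a_u) ≥ b·w(u) + c and ord(a'_u) ≥ b'·w(u) + c' for all u. Then for every u ∈ δ∩ℤ^n, the family of products (a_v · a'_{u−v}), indexed by the set of v ∈ δ∩ℤ^n with u − v ∈ δ∩ℤ^n, is summable in K, and its sum A_u satisfies ord(A_u) ≥ min(b, b')·w(u) + c + c'. (That is, the product of a series in L(b,c) and a series in L(b',c') is well-defined and lies in L(min(b,b'), c+c').) -/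
/-!
Since `Δ` is convex and contains `0`, the weight is the Minkowski gauge of `Δ`, and `δ` lies in the
cone over `Δ`. As `sΔ + tΔ = (s + t)Δ` for `s, t ≥ 0`, the weight is subadditive on `δ`, so every
product `a v * a' (u - v)` has valuation at least
`b w(v) + c + b' w(u - v) + c' ≥ min b b' * w(u) + c + c'`, and the ultrametric inequality passes
this bound to the sum.

The family may be infinite, when `δ` contains a line. But `Δ` is bounded, so the weight dominates a
positive multiple of the norm on `δ` and tends to infinity along its lattice points. The terms
therefore tend to `0`, which is enough for summability in a complete nonarchimedean field.
-/

open Pointwise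

open scoped Classical

open Filter Topology

section Gauge

variable {E : Type*}

lemma exists_mem_smul_of_gauge_lt [AddCommGroup E] [Module ℝ E] {s : Set E} (hs : Convex ℝ s)
    {x : E} (hx : x ∈ ConvexCone.hull ℝ s) {a : ℝ} (ha : gauge s x < a) :
    ∃ r, 0 < r ∧ r < a ∧ x ∈ r • s := by
  have hne : {r ∈ Set.Ioi (0 : ℝ) | x ∈ r • s}.Nonempty := (ConvexCone.mem_hull_of_convex hs).1 hx
  obtain ⟨r, ⟨hr, hxr⟩, hra⟩ := exists_lt_of_csInf_lt hne ha
  exact ⟨r, hr, hra, hxr⟩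

lemma gauge_add_le_of_mem_hull [AddCommGroup E] [Module ℝ E] {s : Set E} (hs : Convex ℝ s)
    {x y : E} (hx : x ∈ ConvexCone.hull ℝ s) (hy : y ∈ ConvexCone.hull ℝ s) :
    gauge s (x + y) ≤ gauge s x + gauge s y := by
  refine le_of_forall_pos_le_add fun ε hε => ?_
  obtain ⟨q, hq, hqx, hxq⟩ :=
    exists_mem_smul_of_gauge_lt hs hx (lt_add_of_pos_right _ (half_pos hε))
  obtain ⟨r, hr, hry, hyr⟩ :=
    exists_mem_smul_of_gauge_lt hs hy (lt_add_of_pos_right _ (half_pos hε))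
  have hxy : x + y ∈ (q + r) • s := by
    rw [hs.add_smul hq.le hr.le]
    exact Set.add_mem_add hxq hyr
  linarith [gauge_le_of_mem (add_pos hq hr).le hxy]

lemma norm_le_mul_gauge_of_mem_hull [SeminormedAddCommGroup E] [NormedSpace ℝ E] {s : Set E}
    (hs : Convex ℝ s) {R : ℝ} (hR : 0 < R) (hsR : ∀ y ∈ s, ‖y‖ ≤ R) {x : E}
    (hx : x ∈ ConvexCone.hull ℝ s) : ‖x‖ ≤ R * gauge s x := by
  rw [← div_le_iff₀' hR]
  refine le_of_forall_gt_imp_ge_of_dense fun a ha => ?_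
  obtain ⟨r, hr, hra, y, hy, rfl⟩ := exists_mem_smul_of_gauge_lt hs hx ha
  calc ‖r • y‖ / R = r * ‖y‖ / R := by rw [norm_smul, Real.norm_of_nonneg hr.le]
    _ ≤ r * R / R := by gcongr; exact hsR y hy
    _ = r := mul_div_cancel_right₀ r hR.ne'
    _ ≤ a := hra.le

end Gauge

section Lattice

variable {n : ℕ}

lemma intToReal_add (u v : Fin n → ℤ) :
    intToReal n (u + v) = intToReal n u + intToReal n v := by
  ext i
  simp [intToReal]

lemma norm_intToReal (u : Fin n → ℤ) : ‖intToReal n u‖ = ‖u‖ := by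
  simp [Pi.norm_def, intToReal, nnnorm, Int.norm_eq_abs]

lemma tendsto_norm_intToReal_cofinite :
    Tendsto (fun u => ‖intToReal n u‖) cofinite atTop := by
  simpa only [norm_intToReal, cocompact_eq_cofinite] using
    tendsto_norm_cocompact_atTop (E := Fin n → ℤ)

end Lattice

section Weight

variable {n N : ℕ} (w : Fin N → Fin n → ℤ)

lemma zero_mem_newtonPolyhedron : (0 : Fin n → ℝ) ∈ newtonPolyhedron n N w :=
  subset_convexHull ℝ _ (Set.mem_insert _ _)

lemma intToReal_mem_newtonPolyhedron (j : Fin N) :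
    intToReal n (w j) ∈ newtonPolyhedron n N w :=
  subset_convexHull ℝ _ (Set.mem_insert_of_mem _ (Set.mem_range_self j))

lemma convex_newtonPolyhedron : Convex ℝ (newtonPolyhedron n N w) :=
  convex_convexHull ℝ _

lemma isBounded_newtonPolyhedron : Bornology.IsBounded (newtonPolyhedron n N w) :=
  isBounded_convexHull.2 ((Set.finite_range _).insert 0).isBounded

lemma deltaCone_subset_hull_newtonPolyhedron :
    deltaCone n N w ⊆ ConvexCone.hull ℝ (newtonPolyhedron n N w) := by
  set C := ConvexCone.hull ℝ (newtonPolyhedron n N w)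
  have zero_mem : 0 ∈ C :=
    ConvexCone.subset_hull (zero_mem_newtonPolyhedron w)
  rintro _ ⟨r, hr, rfl⟩
  refine Finset.sum_induction _ (· ∈ C) (fun _ _ hx hy => C.add_mem hx hy) zero_mem fun j _ => ?_
  rcases (hr j).eq_or_lt with hj | hj
  · rwa [← hj, zero_smul]
  · exact C.smul_mem hj
      (ConvexCone.subset_hull (intToReal_mem_newtonPolyhedron w j))

/-- The two infima differ only in whether `0` is an admissible dilation factor, and `0 • Δ = {0}`,
where the gauge vanishes. -/
lemma weight_eq_gauge (x : Fin n → ℝ) : weight n N w x = gauge (newtonPolyhedron n N w) x := by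
  have hΔ : (newtonPolyhedron n N w).Nonempty := ⟨0, zero_mem_newtonPolyhedron w⟩
  rcases eq_or_ne x 0 with rfl | hx
  · rw [gauge_zero]
    refine IsLeast.csInf_eq ⟨⟨le_rfl, ?_⟩, fun c hc => hc.1⟩
    rw [Set.zero_smul_set hΔ, Set.mem_zero]
  · refine congrArg sInf (Set.ext fun c => and_congr_left fun hxc => ⟨fun hc => ?_, le_of_lt⟩)
    refine hc.lt_of_ne ?_
    rintro rfl
    rw [Set.zero_smul_set hΔ, Set.mem_zero] at hxc
    exact hx hxc

lemma weight_nonneg (x : Fin n → ℝ) : 0 ≤ weight n N w x :=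
  (weight_eq_gauge w x).symm ▸ gauge_nonneg x

variable {w}

lemma weight_add_le {x y : Fin n → ℝ} (hx : x ∈ deltaCone n N w) (hy : y ∈ deltaCone n N w) :
    weight n N w (x + y) ≤ weight n N w x + weight n N w y := by
  simpa only [weight_eq_gauge] using gauge_add_le_of_mem_hull (convex_newtonPolyhedron w)
    (deltaCone_subset_hull_newtonPolyhedron w hx) (deltaCone_subset_hull_newtonPolyhedron w hy)

lemma min_mul_weight_add_le {b b' : ℝ} (hb : 0 ≤ b) (hb' : 0 ≤ b') {x y : Fin n → ℝ}
    (hx : x ∈ deltaCone n N w) (hy : y ∈ deltaCone n N w) :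
    min b b' * weight n N w (x + y) ≤ b * weight n N w x + b' * weight n N w y :=
  calc min b b' * weight n N w (x + y)
      ≤ min b b' * (weight n N w x + weight n N w y) :=
        mul_le_mul_of_nonneg_left (weight_add_le hx hy) (le_min hb hb')
    _ = min b b' * weight n N w x + min b b' * weight n N w y := mul_add _ _ _
    _ ≤ b * weight n N w x + b' * weight n N w y :=
        add_le_add (mul_le_mul_of_nonneg_right (min_le_left b b') (weight_nonneg w x))
          (mul_le_mul_of_nonneg_right (min_le_right b b') (weight_nonneg w y))

variable (w) in
lemma exists_norm_le_mul_weight :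
    ∃ R > 0, ∀ x ∈ deltaCone n N w, ‖x‖ ≤ R * weight n N w x := by
  obtain ⟨R, hR, hΔR⟩ := (isBounded_newtonPolyhedron w).exists_pos_norm_le
  refine ⟨R, hR, fun x hx => ?_⟩
  rw [weight_eq_gauge]
  exact norm_le_mul_gauge_of_mem_hull (convex_newtonPolyhedron w) hR hΔR
    (deltaCone_subset_hull_newtonPolyhedron w hx)

variable {ι : Type*} {l : Filter ι} {f g : ι → Fin n → ℤ}

lemma tendsto_weight_atTop (hf : Tendsto f l cofinite)
    (hfδ : ∀ i, intToReal n (f i) ∈ deltaCone n N w) :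
    Tendsto (fun i => weight n N w (intToReal n (f i))) l atTop := by
  obtain ⟨R, hR, hnorm⟩ := exists_norm_le_mul_weight w
  exact tendsto_atTop_mono (fun i => (div_le_iff₀' hR).2 (hnorm _ (hfδ i)))
    ((tendsto_norm_intToReal_cofinite.comp hf).atTop_div_const hR)

lemma tendsto_mul_weight_add_mul_weight_atTop {b b' : ℝ} (hb : 0 ≤ b) (hb' : 0 ≤ b')
    (hbb' : 0 < b ∨ 0 < b') (hf : Tendsto f l cofinite) (hg : Tendsto g l cofinite)
    (hfδ : ∀ i, intToReal n (f i) ∈ deltaCone n N w)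
    (hgδ : ∀ i, intToReal n (g i) ∈ deltaCone n N w) :
    Tendsto (fun i => b * weight n N w (intToReal n (f i)) + b' * weight n N w (intToReal n (g i)))
      l atTop := by
  rcases hbb' with hb | hb'
  · exact tendsto_atTop_mono (fun i => le_add_of_nonneg_right (mul_nonneg hb' (weight_nonneg w _)))
      ((tendsto_weight_atTop hf hfδ).const_mul_atTop hb)
  · exact tendsto_atTop_mono (fun i => le_add_of_nonneg_left (mul_nonneg hb (weight_nonneg w _)))
      ((tendsto_weight_atTop hg hgδ).const_mul_atTop hb')

end Weight

section Ord

variable {p : ℕ} {K : Type*} [NormedField K]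

lemma le_ord_iff_norm_le_rpow (hp : 1 < p) {x : K} {r : ℝ} :
    (r : EReal) ≤ ord p x ↔ ‖x‖ ≤ (p : ℝ) ^ (-r) := by
  have hp' : (1 : ℝ) < p := by exact_mod_cast hp
  unfold ord
  split_ifs with hx
  · simp only [hx, le_top, norm_zero, true_iff]
    positivity
  · rw [EReal.coe_le_coe_iff, le_neg, Real.logb_le_iff_le_rpow hp' (norm_pos_iff.2 hx)]

lemma add_le_ord_mul (hp : 1 < p) {x y : K} {r s : ℝ} (hx : (r : EReal) ≤ ord p x)
    (hy : (s : EReal) ≤ ord p y) :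
    ((r + s : ℝ) : EReal) ≤ ord p (x * y) := by
  rw [le_ord_iff_norm_le_rpow hp] at hx hy ⊢
  rw [norm_mul, neg_add, Real.rpow_add (by positivity)]
  gcongr

variable {ι : Type*} {f : ι → K}

lemma tendsto_zero_of_le_ord (hp : 1 < p) {l : Filter ι} {r : ι → ℝ}
    (hf : ∀ i, (r i : EReal) ≤ ord p (f i)) (hr : Tendsto r l atTop) :
    Tendsto f l (𝓝 0) := by
  have hp' : (1 : ℝ) < p := by exact_mod_cast hp
  exact squeeze_zero_norm (fun i => (le_ord_iff_norm_le_rpow hp).1 (hf i))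
    ((tendsto_rpow_atBot_of_base_gt_one (p : ℝ) hp').comp (tendsto_neg_atTop_atBot.comp hr))

variable [IsUltrametricDist K]

lemma summable_of_le_ord [CompleteSpace K] (hp : 1 < p) {r : ι → ℝ}
    (hf : ∀ i, (r i : EReal) ≤ ord p (f i)) (hr : Tendsto r cofinite atTop) :
    Summable f :=
  NonarchimedeanAddGroup.summable_of_tendsto_cofinite_zero (tendsto_zero_of_le_ord hp hf hr)

lemma le_ord_tsum (hp : 1 < p) {r : ℝ} (hf : ∀ i, (r : EReal) ≤ ord p (f i)) :
    (r : EReal) ≤ ord p (∑' i, f i) := by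
  simp only [le_ord_iff_norm_le_rpow hp] at hf ⊢
  exact IsUltrametricDist.norm_tsum_le_of_forall_le_of_nonneg (by positivity) hf

end Ord

theorem mul_mem_L_general {p : ℕ} (hp : 1 < p)
    {K : Type*} [NormedField K] [CompleteSpace K] [IsUltrametricDist K]
    {n N : ℕ} {w : Fin N → Fin n → ℤ}
    {b b' c c' : ℝ} (hb : 0 ≤ b) (hb' : 0 ≤ b') (hbb' : 0 < b ∨ 0 < b')
    {a a' : (Fin n → ℤ) → K}
    (ha : ∀ u : Fin n → ℤ, intToReal n u ∈ deltaCone n N w →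
      ((b * weight n N w (intToReal n u) + c : ℝ) : EReal) ≤ ord p (a u))
    (ha' : ∀ u : Fin n → ℤ, intToReal n u ∈ deltaCone n N w →
      ((b' * weight n N w (intToReal n u) + c' : ℝ) : EReal) ≤ ord p (a' u))
    (u : Fin n → ℤ) :
    ∃ A : K,
      HasSum (fun v : {v : Fin n → ℤ //
          intToReal n v ∈ deltaCone n N w ∧ intToReal n (u - v) ∈ deltaCone n N w} =>
        a v.1 * a' (u - v.1)) A ∧
      ((min b b' * weight n N w (intToReal n u) + c + c' : ℝ) : EReal) ≤ ord p A := by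
  have hmem (v : {v : Fin n → ℤ //
      intToReal n v ∈ deltaCone n N w ∧ intToReal n (u - v) ∈ deltaCone n N w}) := v.2
  have hterm := fun v => add_le_ord_mul hp (ha _ (hmem v).1) (ha' _ (hmem v).2)
  refine ⟨_, (summable_of_le_ord hp hterm ?_).hasSum, le_ord_tsum hp fun v => ?_⟩
  · have hweights := tendsto_mul_weight_add_mul_weight_atTop hb hb' hbb'
      Subtype.val_injective.tendsto_cofinite
      (sub_right_injective.comp Subtype.val_injective).tendsto_cofinite
      (fun v => (hmem v).1) (fun v => (hmem v).2)
    exact (tendsto_atTop_add_const_right _ (c + c') hweights).congr fun v => add_add_add_comm ..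
  · refine le_trans (EReal.coe_le_coe_iff.2 ?_) (hterm v)
    have hmin := min_mul_weight_add_le hb hb' v.2.1 v.2.2
    rw [← intToReal_add, add_sub_cancel] at hmin
    linarith

/-- the product of a series in `L(b, c)` and a series in `L(b', c')`
is well-defined and lies in `L(min(b,b'), c+c')`: for every `u ∈ δ ∩ ℤ^n`, the
family of products `a_v · a'_{u-v}`, over `v ∈ δ ∩ ℤ^n` with `u - v ∈ δ ∩ ℤ^n`,
is summable in `K`, with sum `A_u` satisfying
`ord(A_u) ≥ min(b,b')·w(u) + c + c'`. -/
theorem mul_mem_L (p : ℕ) (hp : p.Prime)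
    {K : Type*} [NormedField K] [CompleteSpace K]
    (hna : ∀ x y : K, ‖x + y‖ ≤ max ‖x‖ ‖y‖)
    (hpnorm : ‖(p : K)‖ = (p : ℝ)⁻¹)
    (n N : ℕ) (hn : 1 ≤ n) (w : Fin N → Fin n → ℤ) (hw : ∃ j, w j ≠ 0)
    (b b' c c' : ℝ) (hb : 0 < b) (hb' : 0 < b')
    (a a' : (Fin n → ℤ) → K)
    (ha : ∀ u : Fin n → ℤ, intToReal n u ∈ deltaCone n N w →
      ((b * weight n N w (intToReal n u) + c : ℝ) : EReal) ≤ ord p (a u))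
    (ha' : ∀ u : Fin n → ℤ, intToReal n u ∈ deltaCone n N w →
      ((b' * weight n N w (intToReal n u) + c' : ℝ) : EReal) ≤ ord p (a' u))
    (u : Fin n → ℤ) (hu : intToReal n u ∈ deltaCone n N w) :
    ∃ A : K,
      HasSum (fun v : {v : Fin n → ℤ //
          intToReal n v ∈ deltaCone n N w ∧ intToReal n (u - v) ∈ deltaCone n N w} =>
        a v.1 * a' (u - v.1)) A ∧
      ((min b b' * weight n N w (intToReal n u) + c + c' : ℝ) : EReal) ≤ ord p A := by
  have : IsUltrametricDist K :=
    IsUltrametricDist.isUltrametricDist_of_forall_norm_add_le_max_norm hna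
  exact mul_mem_L_general hp.one_lt hb.le hb'.le (.inl hb) ha ha' u
end
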